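/- arXiv:1403.1700 — 2 statements merged into one kernel-verified Lean document; each statement's English description precedes it below -/
import Mathlib

section
/- Let A = (a_{ij}) be an n×n matrix over an associative unital (possibly noncommutative) ring R such that a_{ij} = 0 whenever j > i+1 and every superdiagonal entry a_{i,i+1} lies in the center of R. Then the column-determinant equals the row-determinant: ∑_{σ∈S_n} sgn(σ)·a_{σ(1),1}·a_{σ(2),2}⋯a_{σ(n),n} = ∑_{σ∈S_n} sgn(σ)·a_{1,σ(1)}·a_{2,σ(2)}⋯a_{n,σ(n)}. -/
/-! The determinants agree term by term: the term of `σ` in `rdet A` is the term of `σ⁻¹` in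
`cdet A`. Both are products of the same factors `A i (σ i)`, ordered by row in the first and by
column in the second, and both vanish unless `σ i ≤ i + 1` for all `i`.

If `σ i ≤ i + 1` for all `i`, call `i` a drop when `σ i ≤ i`. At a drop `i`, the initial segment
`{0, …, i}` is mapped into, hence onto, itself, so `i < j` forces `σ i ≤ i < σ j`
(`lt_apply_of_drop`). Consequently the factors at drops occur in the same order in both products.
All remaining factors are superdiagonal entries, hence central, and can be pulled out to the left
(`prod_map_eq_of_perm`). -/

/-- The column-determinant of a square matrix over a (possibly noncommutative) ring:
`∑_{σ ∈ S_n} sgn(σ) · a_{σ(1),1} · a_{σ(2),2} ⋯ a_{σ(n),n}`, the product taken in the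
indicated order. -/
noncomputable def cdet {R : Type*} [Ring R] {n : ℕ} (A : Matrix (Fin n) (Fin n) R) : R :=
  ∑ σ : Equiv.Perm (Fin n),
    (Equiv.Perm.sign σ : ℤ) • ((List.finRange n).map (fun i => A (σ i) i)).prod

/-- The row-determinant of a square matrix over a (possibly noncommutative) ring:
`∑_{σ ∈ S_n} sgn(σ) · a_{1,σ(1)} · a_{2,σ(2)} ⋯ a_{n,σ(n)}`. -/
noncomputable def rdet {R : Type*} [Ring R] {n : ℕ} (A : Matrix (Fin n) (Fin n) R) : R :=
  ∑ σ : Equiv.Perm (Fin n),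
    (Equiv.Perm.sign σ : ℤ) • ((List.finRange n).map (fun i => A i (σ i))).prod

/-- Factors lying in the center can be collected at the left end of a product. -/
theorem prod_map_filter_central {R ι : Type*} [Ring R] (f : ι → R) (p : ι → Prop)
    [DecidablePred p] (hf : ∀ i, ¬ p i → f i ∈ Set.center R) (l : List ι) :
    (l.map f).prod =
      ((l.filter (fun i => ¬ p i)).map f).prod * ((l.filter (fun i => p i)).map f).prod := by
  induction l with
  | nil => simp
  | cons a l ih =>
    by_cases h : p a
    · have hc : ((l.filter (fun i => ¬ p i)).map f).prod ∈ Subring.center R := by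
        apply Subring.list_prod_mem
        intro x hx
        obtain ⟨i, hi, rfl⟩ := List.mem_map.1 hx
        exact hf i (by simpa using (List.mem_filter.1 hi).2)
      have hcomm := Subring.mem_center_iff.1 hc (f a)
      simp only [List.map_cons, List.prod_cons, ih, h, List.filter_cons, not_true, decide_true,
        decide_false, if_true, Bool.false_eq_true, if_false]
      rw [← mul_assoc, hcomm, mul_assoc]
    · simp only [List.map_cons, List.prod_cons, ih, h, List.filter_cons, not_false_iff,
        decide_true, decide_false, if_true, Bool.false_eq_true, if_false, mul_assoc]

/-- Reordering a product does not change it if the factors outside the center keep their order. -/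
theorem prod_map_eq_of_perm {R ι : Type*} [Ring R] (f : ι → R) (p : ι → Prop)
    [DecidablePred p] (hf : ∀ i, ¬ p i → f i ∈ Set.center R) {l₁ l₂ : List ι}
    (hl : l₁.Perm l₂) (hp : l₁.filter (fun i => p i) = l₂.filter (fun i => p i)) :
    (l₁.map f).prod = (l₂.map f).prod := by
  rw [prod_map_filter_central f p hf l₁, prod_map_filter_central f p hf l₂, hp]
  congr 1
  apply ((hl.filter _).map f).prod_eq'
  apply List.pairwise_of_forall_mem_list
  intro x _ y hy
  obtain ⟨i, hi, rfl⟩ := List.mem_map.1 hy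
  exact Subring.mem_center_iff.1 (hf i (by simpa using (List.mem_filter.1 hi).2)) x

theorem lt_apply_of_drop {n : ℕ} (σ : Equiv.Perm (Fin n))
    (hσ : ∀ i, (σ i : ℕ) ≤ (i : ℕ) + 1) {i j : Fin n} (hi : σ i ≤ i) (hij : i < j) :
    i < σ j := by
  have hmaps : ∀ x ∈ Finset.Iic i, σ x ∈ Finset.Iic i := by
    intro x hx
    rw [Finset.mem_Iic] at hx ⊢
    rcases hx.eq_or_lt with rfl | hx
    · exact hi
    · have := hσ x
      rw [Fin.lt_def] at hx
      rw [Fin.le_def]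
      omega
  by_contra! h
  obtain ⟨x, hx, hxj⟩ := Finset.surj_on_of_inj_on_of_card_le (fun x _ => σ x) hmaps
    (fun _ _ _ _ h => σ.injective h) le_rfl (σ j) (Finset.mem_Iic.2 h)
  have := σ.injective hxj
  rw [Finset.mem_Iic] at hx
  subst this
  exact absurd hij (not_lt.2 hx)

/-- The product of the entries `A i (σ i)` is the same ordered by column as ordered by row. -/
theorem prod_col_eq_prod_row {R : Type*} [Ring R] {n : ℕ} (A : Matrix (Fin n) (Fin n) R)
    (hHess : ∀ i j : Fin n, (i : ℕ) + 1 < (j : ℕ) → A i j = 0)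
    (hCentral : ∀ i j : Fin n, (j : ℕ) = (i : ℕ) + 1 → A i j ∈ Set.center R)
    (σ : Equiv.Perm (Fin n)) :
    ((List.finRange n).map (fun j => A (σ⁻¹ j) j)).prod =
      ((List.finRange n).map (fun i => A i (σ i))).prod := by
  by_cases hσ : ∀ i, (σ i : ℕ) ≤ (i : ℕ) + 1
  · have hmap : (List.finRange n).map (fun j => A (σ⁻¹ j) j) =
        ((List.finRange n).map σ.symm).map (fun i => A i (σ i)) := by
      rw [List.map_map]
      apply List.map_congr_left
      intro j _
      simp [Equiv.Perm.inv_def]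
    have hperm : ((List.finRange n).map σ.symm).Perm (List.finRange n) := by
      rw [List.perm_ext_iff_of_nodup ((List.nodup_finRange n).map σ.symm.injective)
        (List.nodup_finRange n)]
      intro a
      simp only [List.mem_map, List.mem_finRange, true_and, iff_true]
      exact ⟨σ a, by simp⟩
    rw [hmap]
    refine prod_map_eq_of_perm _ (fun i => σ i ≤ i) ?_ hperm ?_
    · intro i hi
      apply hCentral
      have := hσ i
      rw [Fin.le_def] at hi
      omega
    · -- Both lists of drops are strictly increasing and have the same elements.
      refine List.Perm.eq_of_pairwise (le := (· < ·))
        (fun a b _ _ h h' => absurd h h'.asymm) ?_ ?_ (hperm.filter _)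
      · rw [List.pairwise_filter, List.pairwise_map]
        refine (List.pairwise_lt_finRange n).imp ?_
        intro a b hab ha hb
        simp only [Equiv.apply_symm_apply, decide_eq_true_eq] at ha hb
        by_contra! h
        rcases h.eq_or_lt with h | h
        · exact hab.ne (σ.symm.injective h.symm)
        · have := lt_apply_of_drop σ hσ (by simpa using hb) h
          rw [Equiv.apply_symm_apply] at this
          exact absurd hab (not_lt.2 (hb.trans this.le))
      · exact (List.pairwise_lt_finRange n).filter _
  · push Not at hσ
    obtain ⟨i, hi⟩ := hσ
    rw [List.prod_eq_zero, List.prod_eq_zero]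
    · exact List.mem_map.2 ⟨i, List.mem_finRange i, hHess _ _ hi⟩
    · exact List.mem_map.2 ⟨σ i, List.mem_finRange _, by simpa using hHess _ _ hi⟩

/-- If `A` is an `n × n` matrix over an associative unital ring `R` such that `a_{ij} = 0`
whenever `j > i + 1` and every superdiagonal entry `a_{i,i+1}` lies in the center of `R`,
then the column-determinant of `A` equals its row-determinant. -/
theorem cdet_eq_rdet {R : Type*} [Ring R] {n : ℕ} (hn : 1 ≤ n)
    (A : Matrix (Fin n) (Fin n) R)
    (hHess : ∀ i j : Fin n, (i : ℕ) + 1 < (j : ℕ) → A i j = 0)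
    (hCentral : ∀ i j : Fin n, (j : ℕ) = (i : ℕ) + 1 → A i j ∈ Set.center R) :
    cdet A = rdet A := by
  unfold cdet rdet
  rw [← Equiv.sum_comp (Equiv.inv (Equiv.Perm (Fin n)))]
  refine Finset.sum_congr rfl fun σ _ => ?_
  simp only [Equiv.inv_apply, Equiv.Perm.sign_inv]
  rw [prod_col_eq_prod_row A hHess hCentral σ]
end

section
/- The Miura images in type G_2 satisfy the relation w̃_4 = (1/4)·w̃_2^2 + 3·δ^2(w̃_2). -/
/-!
Composing a first-order operator `∂ + M_a` with `∑ M_{c_k} ∂^k` gives `∑ M_{c'_k} ∂^k` with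
`c'_k = c_{k-1} + δ c_k + a c_k`. Iterating this recursion over the seven factors
(`prod_eq_sum_miuraCoeff`) yields explicit coefficients: those of `∂^7` and `∂^6` are `1` and `0`,
and those of `∂^5` and `∂^3` satisfy the stated relation, a differential polynomial identity valid
for any `a, b` in place of `F̃_{22}, F̃_{33}` with `F̃_{11} = a + b` (`miuraCoeff_relation`).

Uniqueness of the coefficients is the linear independence of the powers of `∂` over `Vh`
(`coeff_eq_zero`): if `P = ∑_{k ≤ n} M_{a_k} ∂^k` vanishes, so does its commutator with `M_x`, which
has order `n - 1` and leading coefficient `n a_n δ(x)`. As `Vh` is a domain of characteristic zero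
and `δ(H_α) ≠ 0`, taking `x = H_α` gives `a_n = 0` by induction on `n` (`leading_coeff_eq_zero`).
-/

noncomputable section

open MvPolynomial

/-- `Vh`: the polynomial algebra `ℂ[H_α^{(r)}, H_β^{(r)} : r ≥ 0]` (index `0` is `H_α`,
index `1` is `H_β`). -/
abbrev VhG := MvPolynomial (Fin 2 × ℕ) ℂ

/-- The derivation `δ` with `δ(H_α^{(r)}) = H_α^{(r+1)}`, `δ(H_β^{(r)}) = H_β^{(r+1)}`. -/
def delG : Derivation ℂ VhG VhG :=
  MvPolynomial.mkDerivation ℂ (fun v => X (v.1, v.2 + 1))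

/-- `∂ := δ` as a `ℂ`-linear endomorphism of `Vh`. -/
def DelG : Module.End ℂ VhG := delG.toLinearMap

/-- `M_g`: multiplication by `g ∈ Vh`. -/
def MG (g : VhG) : Module.End ℂ VhG := LinearMap.mulLeft ℂ g

/-- `F̃_{11} = −H_α − (2/3)H_β`. -/
def F11t : VhG := -(X ((0 : Fin 2), 0)) - ((2 : ℂ) / 3) • X ((1 : Fin 2), 0)

/-- `F̃_{22} = −H_α − (1/3)H_β`. -/
def F22t : VhG := -(X ((0 : Fin 2), 0)) - ((1 : ℂ) / 3) • X ((1 : Fin 2), 0)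

/-- `F̃_{33} = −(1/3)H_β`. -/
def F33t : VhG := -(((1 : ℂ) / 3) • X ((1 : Fin 2), 0))

/-- `miuraCoeff [a₁, …, aₙ] k` is the coefficient of `∂^k`, written to the right of its coefficient,
in `(∂ + M_{a₁}) ∘ ⋯ ∘ (∂ + M_{aₙ})`. -/
def miuraCoeff : List VhG → ℕ → VhG
  | [], 0 => 1
  | [], _ + 1 => 0
  | a :: l, 0 => delG (miuraCoeff l 0) + a * miuraCoeff l 0
  | a :: l, k + 1 => miuraCoeff l k + delG (miuraCoeff l (k + 1)) + a * miuraCoeff l (k + 1)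

lemma miuraCoeff_eq_zero (l : List VhG) : ∀ k, l.length < k → miuraCoeff l k = 0 := by
  induction l with
  | nil =>
    intro k hk
    cases k with
    | zero => simp at hk
    | succ k => rfl
  | cons a l ih =>
    intro k hk
    cases k with
    | zero => simp at hk
    | succ k =>
      simp only [List.length_cons] at hk
      simp [miuraCoeff, ih k (by omega), ih (k + 1) (by omega)]

lemma DelG_mul_MG (g : VhG) : DelG * MG g = MG g * DelG + MG (delG g) := by
  refine LinearMap.ext fun f => ?_
  simp [DelG, MG, mul_comm]

lemma MG_add (f g : VhG) : MG (f + g) = MG f + MG g := by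
  refine LinearMap.ext fun h => ?_
  simp [MG, add_mul]

lemma MG_mul (f g : VhG) : MG (f * g) = MG f * MG g := by
  refine LinearMap.ext fun h => ?_
  simp [MG]

lemma MG_zero : MG 0 = 0 := by
  refine LinearMap.ext fun h => ?_
  simp [MG]

lemma MG_one : MG 1 = 1 := by
  refine LinearMap.ext fun h => ?_
  simp [MG]

lemma MG_neg (f : VhG) : MG (-f) = -MG f := by
  refine LinearMap.ext fun h => ?_
  simp [MG]

lemma prod_eq_sum_miuraCoeff (l : List VhG) :
    (l.map fun a => DelG + MG a).prod =
      ∑ k ∈ Finset.range (l.length + 1), MG (miuraCoeff l k) * DelG ^ k := by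
  induction l with
  | nil => simp [miuraCoeff, MG_one]
  | cons a l ih =>
    have key : ∀ k, (DelG + MG a) * (MG (miuraCoeff l k) * DelG ^ k) =
        MG (miuraCoeff l k) * DelG ^ (k + 1) +
          (MG (delG (miuraCoeff l k)) + MG a * MG (miuraCoeff l k)) * DelG ^ k := by
      intro k
      rw [add_mul, ← mul_assoc, DelG_mul_MG, pow_succ']
      noncomm_ring
    have hz : MG (miuraCoeff l (l.length + 1)) = 0 := by
      rw [miuraCoeff_eq_zero l _ (by omega), MG_zero]
    have hz' : MG (delG (miuraCoeff l (l.length + 1))) = 0 := by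
      rw [miuraCoeff_eq_zero l _ (by omega), map_zero, MG_zero]
    rw [List.map_cons, List.prod_cons, ih, Finset.mul_sum, Finset.sum_congr rfl fun k _ => key k,
      Finset.sum_add_distrib, List.length_cons, Finset.sum_range_succ' _ (l.length + 1)]
    simp only [miuraCoeff, MG_add, MG_mul, add_mul, add_assoc, Finset.sum_add_distrib]
    -- the shifted sums on the right run one step further, over a vanishing coefficient
    have e1 := Finset.sum_range_succ'
      (fun k => MG (delG (miuraCoeff l k)) * DelG ^ k) (l.length + 1)
    have e2 := Finset.sum_range_succ'
      (fun k => MG a * MG (miuraCoeff l k) * DelG ^ k) (l.length + 1)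
    rw [Finset.sum_range_succ] at e1 e2
    simp only [hz, hz', mul_zero, zero_mul, add_zero] at e1 e2
    rw [e1, e2]
    abel

/-- The arguments of the seven factors, with `a = F̃_{22}`, `b = F̃_{33}` and `a + b = F̃_{11}`. -/
def miuraArgs (a b : VhG) : List VhG := [a + b, a, b, 0, -b, -a, -(a + b)]

lemma miuraCoeff_seven (a b : VhG) : miuraCoeff (miuraArgs a b) 7 = 1 := by
  simp [miuraArgs, miuraCoeff]

lemma miuraCoeff_six (a b : VhG) : miuraCoeff (miuraArgs a b) 6 = 0 := by
  simp [miuraArgs, miuraCoeff]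

lemma miuraCoeff_relation (a b : VhG) :
    miuraCoeff (miuraArgs a b) 3 =
      ((1 : ℂ) / 4) • miuraCoeff (miuraArgs a b) 5 ^ 2 +
        (3 : ℂ) • (DelG ^ 2) (miuraCoeff (miuraArgs a b) 5) := by
  have h3 : (3 : ℂ) • (DelG ^ 2) (miuraCoeff (miuraArgs a b) 5) =
      3 * delG (delG (miuraCoeff (miuraArgs a b) 5)) := by
    rw [Algebra.smul_def, map_ofNat, pow_two]
    rfl
  -- with denominators cleared and `•` replaced by `*`, the relation is an identity for `ring`
  have h4 : (4 : ℂ) • miuraCoeff (miuraArgs a b) 3 =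
      miuraCoeff (miuraArgs a b) 5 ^ 2 +
        12 * delG (delG (miuraCoeff (miuraArgs a b) 5)) := by
    rw [Algebra.smul_def, map_ofNat]
    simp only [miuraArgs, miuraCoeff, map_add, map_neg, map_zero, Derivation.leibniz, smul_eq_mul,
      Derivation.map_one_eq_zero, mul_zero, zero_mul, add_zero, zero_add, mul_one]
    ring
  have h : miuraCoeff (miuraArgs a b) 3 =
      ((1 : ℂ) / 4) • ((4 : ℂ) • miuraCoeff (miuraArgs a b) 3) := by
    rw [smul_smul]
    norm_num
  rw [h3, h, h4, smul_add]
  congr 1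
  rw [← map_ofNat (algebraMap ℂ VhG) 12, ← Algebra.smul_def, smul_smul,
    ← map_ofNat (algebraMap ℂ VhG) 3, ← Algebra.smul_def]
  norm_num

lemma F11t_eq : F11t = F22t + F33t := by
  simp only [F11t, F22t, F33t]
  module

lemma delG_H_ne_zero : delG (X ((0 : Fin 2), 0)) ≠ 0 := by
  simp [delG, mkDerivation_X]

/-- The commutator of `∂^(n+1)` with `M_x` has order `n` and leading coefficient
`(n + 1) δ(x)`. -/
lemma exists_commutator (x : VhG) (n : ℕ) : ∃ b : ℕ → VhG, ∀ f,
    (DelG ^ (n + 1)) (x * f) = x * (DelG ^ (n + 1)) f +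
      (((n + 1 : ℕ) : VhG) * delG x * (DelG ^ n) f + ∑ k ∈ Finset.range n, b k * (DelG ^ k) f) := by
  have hs : ∀ (k : ℕ) (f : VhG), (DelG ^ (k + 1)) f = delG ((DelG ^ k) f) := by
    intro k f
    rw [pow_succ']
    rfl
  induction n with
  | zero =>
    refine ⟨0, fun f => ?_⟩
    simp [DelG, mul_comm]
  | succ n ih =>
    obtain ⟨b, hb⟩ := ih
    refine ⟨fun k => (if k = n then ((n + 1 : ℕ) : VhG) * delG (delG x) else delG (b k)) +
      (if k = 0 then 0 else b (k - 1)), fun f => ?_⟩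
    have hn : delG ((n + 1 : ℕ) : VhG) = 0 := Derivation.map_natCast delG (n + 1)
    have e1 : ∑ k ∈ Finset.range n,
        (if k = n then ((n + 1 : ℕ) : VhG) * delG (delG x) else delG (b k)) * (DelG ^ k) f =
        ∑ k ∈ Finset.range n, delG (b k) * (DelG ^ k) f := by
      refine Finset.sum_congr rfl fun k hk => ?_
      rw [if_neg (Finset.mem_range.mp hk).ne]
    simp only [add_mul, Finset.sum_add_distrib]
    rw [Finset.sum_range_succ, e1, Finset.sum_range_succ', hs (n + 1) (x * f), hb]
    simp only [map_add, map_sum, Derivation.leibniz, smul_eq_mul, hn, hs, if_true,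
      Nat.succ_ne_zero, if_false, Nat.add_sub_cancel, Finset.sum_add_distrib]
    have e2 : ∑ k ∈ Finset.range n, (DelG ^ k) f * delG (b k) =
        ∑ k ∈ Finset.range n, delG (b k) * (DelG ^ k) f :=
      Finset.sum_congr rfl fun k _ => mul_comm _ _
    rw [e2]
    push_cast
    ring

/-- A vanishing operator of order at most `n` has vanishing coefficient at `∂^n`; by induction on
`n`, applied to the commutator with multiplication by `H_α`. -/
lemma leading_coeff_eq_zero (n : ℕ) : ∀ c : ℕ → VhG,
    (∀ f, ∑ k ∈ Finset.range (n + 1), c k * (DelG ^ k) f = 0) → c n = 0 := by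
  induction n with
  | zero =>
    intro c hc
    simpa using hc 1
  | succ n ih =>
    intro c hc
    set x : VhG := X ((0 : Fin 2), 0) with hx
    choose b hb using exists_commutator x
    -- the coefficients of the commutator of the vanishing operator with `M_x`
    have h := ih (fun j => c (j + 1) * (((j + 1 : ℕ) : VhG) * delG x) +
      ∑ k ∈ Finset.range (n + 1), if j < k then c (k + 1) * b k j else 0) ?_
    · have hz : ∑ k ∈ Finset.range (n + 1), (if n < k then c (k + 1) * b k n else 0) = 0 := by
        refine Finset.sum_eq_zero fun k hk => if_neg ?_
        have := Finset.mem_range.mp hk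
        omega
      have hn : ((n + 1 : ℕ) : VhG) ≠ 0 := Nat.cast_ne_zero.mpr n.succ_ne_zero
      simp only [hz, add_zero] at h
      exact (mul_eq_zero.mp h).resolve_right (mul_ne_zero hn delG_H_ne_zero)
    · intro f
      have h1 := hc (x * f)
      have h2 := hc f
      rw [Finset.sum_range_succ'] at h1 h2
      simp only [hb] at h1
      have hsplit : ∀ k ∈ Finset.range (n + 1),
          ∑ j ∈ Finset.range k, c (k + 1) * (b k j * (DelG ^ j) f) =
          ∑ j ∈ Finset.range (n + 1),
            (if j < k then c (k + 1) * b k j else 0) * (DelG ^ j) f := by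
        intro k hk
        have hk' := Finset.mem_range.mp hk
        rw [← Finset.sum_subset (Finset.range_mono hk'.le)]
        · refine Finset.sum_congr rfl fun j hj => ?_
          rw [if_pos (Finset.mem_range.mp hj), mul_assoc]
        · intro j _ hj
          rw [if_neg (by simpa using hj), zero_mul]
      simp only [add_mul, Finset.sum_mul, Finset.sum_add_distrib]
      rw [Finset.sum_comm, ← Finset.sum_congr rfl hsplit]
      simp only [mul_add, Finset.sum_add_distrib, Finset.mul_sum] at h1
      have h3 : x * ∑ k ∈ Finset.range (n + 1), c (k + 1) * (DelG ^ (k + 1)) f =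
          ∑ k ∈ Finset.range (n + 1), c (k + 1) * (x * (DelG ^ (k + 1)) f) := by
        rw [Finset.mul_sum]
        exact Finset.sum_congr rfl fun k _ => by ring
      simp only [pow_zero, Module.End.one_apply] at h1 h2
      simp only [mul_assoc] at h1 ⊢
      linear_combination h1 - x * h2 + h3

/-- The powers of `∂` are linearly independent over `Vh`. -/
lemma coeff_eq_zero (n : ℕ) : ∀ c : ℕ → VhG,
    (∑ k ∈ Finset.range n, MG (c k) * DelG ^ k) = 0 → ∀ k < n, c k = 0 := by
  induction n with
  | zero =>
    intro c _ k hk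
    omega
  | succ n ih =>
    intro c hc k hk
    have hn : c n = 0 := by
      refine leading_coeff_eq_zero n c fun f => ?_
      simpa [MG] using congrArg (fun P : Module.End ℂ VhG => P f) hc
    rw [Finset.sum_range_succ, hn, MG_zero, zero_mul, add_zero] at hc
    rcases Nat.lt_succ_iff_lt_or_eq.mp hk with h | h
    · exact ih c hc k h
    · rw [h, hn]

/-- The Miura images in type `G_2` satisfy `w̃_4 = (1/4)·w̃_2² + 3·δ²(w̃_2)`, where
`w̃_2, …, w̃_7` are the unique elements with
`(∂+M_{F̃_{11}})∘(∂+M_{F̃_{22}})∘(∂+M_{F̃_{33}})∘∂∘(∂−M_{F̃_{33}})∘(∂−M_{F̃_{22}})∘(∂−M_{F̃_{11}})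
= ∂^7 + ∑_{k=2}^{7} M_{w̃_k}∘∂^{7−k}`. -/
theorem miura_g2_relation :
    (∃! w : Fin 6 → VhG,
        (DelG + MG F11t) * (DelG + MG F22t) * (DelG + MG F33t) * DelG *
            (DelG - MG F33t) * (DelG - MG F22t) * (DelG - MG F11t) =
          DelG ^ 7 + ∑ k : Fin 6, MG (w k) * DelG ^ (5 - (k : ℕ))) ∧
      ∀ w : Fin 6 → VhG,
        (DelG + MG F11t) * (DelG + MG F22t) * (DelG + MG F33t) * DelG *
            (DelG - MG F33t) * (DelG - MG F22t) * (DelG - MG F11t) =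
          DelG ^ 7 + ∑ k : Fin 6, MG (w k) * DelG ^ (5 - (k : ℕ)) →
          w 2 = ((1 : ℂ) / 4) • (w 0) ^ 2 + (3 : ℂ) • (DelG ^ 2) (w 0) := by
  set c := miuraCoeff (miuraArgs F22t F33t) with hc
  have hprod : (DelG + MG F11t) * (DelG + MG F22t) * (DelG + MG F33t) * DelG *
      (DelG - MG F33t) * (DelG - MG F22t) * (DelG - MG F11t) =
      DelG ^ 7 + ∑ k : Fin 6, MG (c (5 - (k : ℕ))) * DelG ^ (5 - (k : ℕ)) := by
    have h := prod_eq_sum_miuraCoeff (miuraArgs F22t F33t)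
    rw [← hc] at h
    simp only [miuraArgs, ← F11t_eq, List.map_cons, List.map_nil, List.prod_cons, List.prod_nil,
      mul_one, MG_neg, ← sub_eq_add_neg, MG_zero, add_zero, List.length_cons, List.length_nil,
      ← mul_assoc] at h
    rw [h]
    simp only [zero_add, Nat.reduceAdd, Finset.sum_range_succ, Finset.sum_range_zero,
      Fin.sum_univ_succ, Fin.sum_univ_zero]
    rw [show c 7 = 1 from miuraCoeff_seven _ _, show c 6 = 0 from miuraCoeff_six _ _, MG_one,
      MG_zero]
    simp
    abel
  have huniq : ∀ w : Fin 6 → VhG,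
      (DelG + MG F11t) * (DelG + MG F22t) * (DelG + MG F33t) * DelG *
        (DelG - MG F33t) * (DelG - MG F22t) * (DelG - MG F11t) =
        DelG ^ 7 + ∑ k : Fin 6, MG (w k) * DelG ^ (5 - (k : ℕ)) →
      w = fun k : Fin 6 => c (5 - (k : ℕ)) := by
    intro w hw
    rw [hprod, add_right_inj, ← sub_eq_zero, ← Finset.sum_sub_distrib] at hw
    have h0 : ∑ k ∈ Finset.range 6, MG (c k - w (Fin.ofNat 6 (5 - k))) * DelG ^ k = 0 := by
      rw [← hw, ← Finset.sum_range_reflect, Finset.sum_range]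
      refine Finset.sum_congr rfl fun k _ => ?_
      have hk : Fin.ofNat 6 (5 - (6 - 1 - (k : ℕ))) = k := by
        ext
        simp [Fin.ofNat]
        omega
      rw [hk, sub_eq_add_neg, MG_add, MG_neg, ← sub_eq_add_neg, sub_mul]
    have h1 := coeff_eq_zero 6 _ h0
    funext k
    have hk : Fin.ofNat 6 (5 - (5 - (k : ℕ))) = k := by
      ext
      simp [Fin.ofNat]
      omega
    have h2 := h1 (5 - (k : ℕ)) (by omega)
    rw [hk] at h2
    exact (sub_eq_zero.mp h2).symm
  refine ⟨⟨_, hprod, huniq⟩, fun w hw => ?_⟩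
  rw [huniq w hw]
  exact miuraCoeff_relation F22t F33t

end
end
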